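/- Let 1/2 < H < 3/4 and define d_H = ∫_{[0,∞)³} e^{-x - |y-z|} z^{2H-2} |x-y|^{2H-2} dx dy dz. Then d_H = (2H - 1/2) Γ(2H-1)² + (4H-1) Γ(2H-1) Γ(3-4H) Γ(4H-2) / Γ(2-2H). -/

import Mathlib

open MeasureTheory Real Set

noncomputable def PP (b t : ℝ) : ENNReal := if 0 < t then ENNReal.ofReal (t ^ (b-1)) else 0
noncomputable def EE (t : ℝ) : ENNReal := if 0 < t then ENNReal.ofReal (Real.exp (-t)) else 0

@[fun_prop]
lemma PP_meas (b : ℝ) : Measurable (PP b) := by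
  unfold PP
  exact Measurable.ite measurableSet_Ioi (by fun_prop) (by fun_prop)
@[fun_prop]
lemma EE_meas : Measurable EE := by
  unfold EE
  exact Measurable.ite measurableSet_Ioi (by fun_prop) (by fun_prop)

lemma PP_pos {b t : ℝ} (h : 0 < t) : PP b t = ENNReal.ofReal (t ^ (b-1)) := if_pos h
lemma EE_pos {t : ℝ} (h : 0 < t) : EE t = ENNReal.ofReal (Real.exp (-t)) := if_pos h
lemma PP_neg {b t : ℝ} (h : t ≤ 0) : PP b t = 0 := if_neg h.not_gt
lemma EE_neg {t : ℝ} (h : t ≤ 0) : EE t = 0 := if_neg h.not_gt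

lemma lapl {b w : ℝ} (hb : 0 < b) (hw : 0 < w) :
    ∫⁻ s, PP b s * ENNReal.ofReal (Real.exp (-(w*s))) = ENNReal.ofReal (Gamma b * w^(-b)) := by
  have h := Real.integral_rpow_mul_exp_neg_mul_Ioi hb hw
  have hpos : 0 < Gamma b * w^(-b) := mul_pos (Gamma_pos_of_pos hb) (rpow_pos_of_pos hw _)
  have e : (1 / w) ^ b * Gamma b = Gamma b * w^(-b) := by
    rw [one_div, inv_rpow hw.le, rpow_neg hw.le, mul_comm]
  rw [e] at h
  rw [← h, ofReal_integral_eq_lintegral_ofReal]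
  · rw [← lintegral_indicator measurableSet_Ioi]
    congr 1; ext s
    by_cases hs : 0 < s
    · rw [indicator_of_mem (by exact hs), PP_pos hs, ENNReal.ofReal_mul (by positivity)]
    · rw [indicator_of_notMem (by exact hs), PP_neg (not_lt.1 hs), zero_mul]
  · by_contra hc
    rw [integral_undef hc] at h
    linarith
  · filter_upwards [ae_restrict_mem measurableSet_Ioi] with s hs
    have : (0:ℝ) < s := hs
    simp only [Pi.zero_apply]; positivity

lemma gam {b : ℝ} (hb : 0 < b) : ∫⁻ s, PP b s * EE s = ENNReal.ofReal (Gamma b) := by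
  have := lapl hb one_pos
  rw [one_rpow, mul_one] at this
  rw [← this]
  congr 1; ext s
  by_cases hs : 0 < s
  · rw [EE_pos hs, one_mul]
  · rw [PP_neg (not_lt.1 hs), zero_mul, zero_mul]

lemma PPmul {b c t : ℝ} : PP b t * PP c t = PP (b+c-1) t := by
  by_cases hs : 0 < t
  · rw [PP_pos hs, PP_pos hs, PP_pos hs, ← ENNReal.ofReal_mul (by positivity), ← rpow_add hs]
    congr 2; ring
  · simp [PP_neg (not_lt.1 hs)]

lemma betaI {a w : ℝ} (ha : 0 < a) (ha2 : a < 1/2) (hw : 0 < w) :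
    ∫⁻ x, PP a x * PP a (x+w) =
      ENNReal.ofReal (Gamma a * Gamma (1-2*a) / Gamma (1-a)) * PP (2*a) w := by
  have hG : 0 < Gamma (1-a) := Gamma_pos_of_pos (by linarith)
  have hG1 : 0 < Gamma a := Gamma_pos_of_pos (by linarith)
  have hG2 : 0 < Gamma (1-2*a) := Gamma_pos_of_pos (by linarith)
  have h1 : ∀ x, PP a x * PP a (x+w) = ENNReal.ofReal (1/Gamma (1-a)) *
      ∫⁻ s, PP (1-a) s * ENNReal.ofReal (Real.exp (-(w*s))) *
        (PP a x * ENNReal.ofReal (Real.exp (-(s*x)))) := by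
    intro x
    by_cases hx : 0 < x
    · have : ∀ s, PP (1-a) s * ENNReal.ofReal (Real.exp (-(w*s))) *
        (PP a x * ENNReal.ofReal (Real.exp (-(s*x)))) =
          PP a x * (PP (1-a) s * ENNReal.ofReal (Real.exp (-((x+w)*s)))) := by
        intro s
        have : Real.exp (-((x+w)*s)) = Real.exp (-(w*s)) * Real.exp (-(s*x)) := by
          rw [← Real.exp_add]; ring_nf
        rw [this, ENNReal.ofReal_mul (by positivity)]
        ring
      simp_rw [this]
      rw [lintegral_const_mul _ (by fun_prop), lapl (by linarith) (by linarith),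
        PP_pos (by linarith : 0 < x + w), mul_left_comm, ← ENNReal.ofReal_mul (by positivity)]
      congr 2
      field_simp
      congr 1; ring
    · simp [PP_neg (not_lt.1 hx)]
  simp_rw [h1]
  rw [lintegral_const_mul _ (by fun_prop), lintegral_lintegral_swap (by fun_prop)]
  have h2 : ∀ s, ∫⁻ x, PP (1-a) s * ENNReal.ofReal (Real.exp (-(w*s))) *
        (PP a x * ENNReal.ofReal (Real.exp (-(s*x)))) =
        ENNReal.ofReal (Gamma a) * (PP (1-2*a) s * ENNReal.ofReal (Real.exp (-(w*s)))) := by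
    intro s
    by_cases hs : 0 < s
    · rw [lintegral_const_mul _ (by fun_prop), lapl ha hs, ENNReal.ofReal_mul hG1.le]
      have e1 : ENNReal.ofReal (s ^ (-a)) = PP (1-a) s := by
        rw [PP_pos hs]; congr 2; ring
      have e2 : PP (1-2*a) s = PP (1-a) s * PP (1-a) s := by
        rw [PPmul]; congr 1; ring
      rw [e1, e2]; ring
    · simp [PP_neg (not_lt.1 hs)]
  simp_rw [h2]
  rw [lintegral_const_mul _ (by fun_prop), lapl (by linarith) hw, PP_pos hw,
    ← ENNReal.ofReal_mul (by positivity), ← ENNReal.ofReal_mul (by positivity),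
    ← ENNReal.ofReal_mul (by positivity)]
  congr 1
  rw [show -(1-2*a) = 2*a-1 by ring]
  field_simp

/-- double integral against a kernel supported on positives -/
lemma dbl {a : ℝ} (ha : 0 < a) (ha2 : a < 1/2) (φ : ℝ → ENNReal) (hφ : Measurable φ)
    (h0 : ∀ t ≤ 0, φ t = 0) :
    ∫⁻ x, ∫⁻ z, PP a x * PP a z * φ (z - x) =
      ENNReal.ofReal (Gamma a * Gamma (1-2*a) / Gamma (1-a)) * ∫⁻ w, PP (2*a) w * φ w := by
  have h1 : ∀ x, ∫⁻ z, PP a x * PP a z * φ (z - x) = ∫⁻ w, φ w * (PP a x * PP a (x+w)) := by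
    intro x
    rw [← lintegral_add_left_eq_self _ x]
    congr 1; ext w
    rw [add_sub_cancel_left]; ring
  simp_rw [h1]
  rw [lintegral_lintegral_swap (by fun_prop), ← lintegral_const_mul _ (by fun_prop)]
  congr 1; ext w
  rw [lintegral_const_mul _ (by fun_prop)]
  by_cases hw : 0 < w
  · rw [betaI ha ha2 hw]; ring
  · rw [h0 w (not_lt.1 hw)]; simp

/-- convolution of EE with itself -/
lemma convE (t : ℝ) : ∫⁻ y, EE y * EE (t - y) = PP 2 t * EE t := by
  by_cases ht : 0 < t
  · have : ∀ y, EE y * EE (t-y) = (Ioo 0 t).indicator (fun _ => EE t) y := by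
      intro y
      by_cases hy : y ∈ Ioo 0 t
      · rw [indicator_of_mem hy, EE_pos hy.1, EE_pos (sub_pos.2 hy.2), EE_pos ht,
          ← ENNReal.ofReal_mul (by positivity), ← Real.exp_add]
        congr 2; ring
      · rw [indicator_of_notMem hy]
        rcases le_or_gt y 0 with h | h
        · rw [EE_neg h, zero_mul]
        · rw [EE_neg (t := t-y), mul_zero]
          by_contra hc
          exact hy ⟨h, by linarith⟩
    simp_rw [this]
    rw [lintegral_indicator_const measurableSet_Ioo, PP_pos ht, mul_comm]
    simp
    norm_num
  · rw [PP_neg (not_lt.1 ht), zero_mul]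
    rw [lintegral_eq_zero_iff (by fun_prop)]
    refine Filter.Eventually.of_forall fun y => ?_
    rcases le_or_gt y 0 with h | h
    · simp [EE_neg h]
    · have : t - y ≤ 0 := by linarith
      simp [EE_neg this]

lemma expint (c : ℝ) : ∫⁻ y in Ioi c, ENNReal.ofReal (Real.exp (-(2*y))) =
    ENNReal.ofReal (Real.exp (-(2*c)) / 2) := by
  have h := integral_exp_mul_Ioi (a := -2) (by norm_num) c
  rw [← ofReal_integral_eq_lintegral_ofReal]
  · simp_rw [neg_mul] at h
    rw [h]; congr 1; ring
  · simpa [IntegrableOn] using integrableOn_exp_mul_Ioi (a := -2) (by norm_num) c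
  · exact Filter.Eventually.of_forall fun y => by simp only [Pi.zero_apply]; positivity

lemma corrE (t : ℝ) (ht : t ≠ 0) : ∫⁻ y, EE y * EE (y - t) =
    ENNReal.ofReal (1/2) * (EE t + EE (-t)) := by
  have : ∀ y, EE y * EE (y-t) = (Ioi (max 0 t)).indicator
      (fun y => ENNReal.ofReal (Real.exp t) * ENNReal.ofReal (Real.exp (-(2*y)))) y := by
    intro y
    by_cases hy : y ∈ Ioi (max 0 t)
    · have hy' := max_lt_iff.1 (mem_Ioi.1 hy)
      rw [indicator_of_mem hy, EE_pos hy'.1, EE_pos (sub_pos.2 hy'.2),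
          ← ENNReal.ofReal_mul (by positivity), ← Real.exp_add,
          ← ENNReal.ofReal_mul (by positivity), ← Real.exp_add]
      congr 2; ring
    · rw [indicator_of_notMem hy]
      rw [mem_Ioi, max_lt_iff, not_and_or, not_lt, not_lt] at hy
      rcases hy with h | h
      · rw [EE_neg h, zero_mul]
      · rw [EE_neg (t := y-t) (by linarith), mul_zero]
  simp_rw [this]
  rw [lintegral_indicator measurableSet_Ioi, lintegral_const_mul _ (by fun_prop), expint,
    ← ENNReal.ofReal_mul (by positivity)]
  rcases lt_or_gt_of_ne ht with h | h
  · rw [max_eq_left h.le, EE_neg h.le, EE_pos (by linarith), zero_add,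
      ← ENNReal.ofReal_mul (by positivity)]
    congr 1
    rw [mul_zero, neg_zero, Real.exp_zero, neg_neg]; ring
  · rw [max_eq_right h.le, EE_neg (t := -t) (by linarith), EE_pos (by linarith), add_zero,
      ← ENNReal.ofReal_mul (by positivity), ← mul_div_assoc, ← Real.exp_add]
    congr 1; ring_nf

noncomputable def gg (a y : ℝ) : ENNReal := ∫⁻ x, PP a x * EE (y - x)
noncomputable def hh (a y : ℝ) : ENNReal := ∫⁻ x, PP a x * EE (x - y)

@[fun_prop]
lemma gg_meas (a : ℝ) : Measurable (gg a) := by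
  unfold gg
  exact Measurable.lintegral_prod_right' (f := fun p : ℝ × ℝ => PP a p.2 * EE (p.1 - p.2)) (by fun_prop)
@[fun_prop]
lemma hh_meas (a : ℝ) : Measurable (hh a) := by
  unfold hh
  exact Measurable.lintegral_prod_right' (f := fun p : ℝ × ℝ => PP a p.2 * EE (p.2 - p.1)) (by fun_prop)

lemma T3 {a : ℝ} (ha : 0 < a) : ∫⁻ y, EE y * gg a y = ENNReal.ofReal (Gamma a / 2) := by
  unfold gg
  have h1 : ∀ y, EE y * ∫⁻ x, PP a x * EE (y - x) = ∫⁻ x, PP a x * (EE y * EE (y-x)) := by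
    intro y
    rw [← lintegral_const_mul _ (by fun_prop)]
    congr 1; ext x; ring
  simp_rw [h1]
  rw [lintegral_lintegral_swap (by fun_prop)]
  have h2 : ∀ x, ∫⁻ y, PP a x * (EE y * EE (y-x)) = ENNReal.ofReal (1/2) * (PP a x * EE x) := by
    intro x
    rw [lintegral_const_mul _ (by fun_prop)]
    by_cases hx : 0 < x
    · rw [corrE x hx.ne', EE_neg (t := -x) (by linarith), add_zero]; ring
    · rw [PP_neg (not_lt.1 hx)]; simp
  simp_rw [h2]
  rw [lintegral_const_mul _ (by fun_prop), gam ha, ← ENNReal.ofReal_mul (by positivity)]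
  congr 1; ring

lemma T4 {a : ℝ} (ha : 0 < a) : ∫⁻ y, EE y * hh a y = ENNReal.ofReal (a * Gamma a) := by
  unfold hh
  have h1 : ∀ y, EE y * ∫⁻ x, PP a x * EE (x - y) = ∫⁻ x, PP a x * (EE y * EE (x-y)) := by
    intro y
    rw [← lintegral_const_mul _ (by fun_prop)]
    congr 1; ext x; ring
  simp_rw [h1]
  rw [lintegral_lintegral_swap (by fun_prop)]
  have h2 : ∀ x, ∫⁻ y, PP a x * (EE y * EE (x-y)) = PP (a+1) x * EE x := by
    intro x
    rw [lintegral_const_mul _ (by fun_prop), convE, ← mul_assoc, PPmul]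
    congr 2; ring
  simp_rw [h2]
  rw [gam (by linarith), Gamma_add_one ha.ne']

/-- merge a product of two one-dimensional integrals -/
lemma merge (a : ℝ) (k l : ℝ → ℝ → ENNReal) (hk : Measurable (fun p : ℝ × ℝ => k p.1 p.2))
    (hl : Measurable (fun p : ℝ × ℝ => l p.1 p.2)) :
    ∫⁻ y, (∫⁻ x, PP a x * k y x) * (∫⁻ z, PP a z * l y z) =
      ∫⁻ x, ∫⁻ z, PP a x * PP a z * ∫⁻ y, k y x * l y z := by
  have h1 : ∀ y, (∫⁻ x, PP a x * k y x) * (∫⁻ z, PP a z * l y z) =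
      ∫⁻ x, ∫⁻ z, PP a x * PP a z * (k y x * l y z) := by
    intro y
    rw [← lintegral_mul_const _ (by fun_prop)]
    congr 1; ext x
    rw [← lintegral_const_mul _ (by fun_prop)]
    congr 1; ext z; ring
  simp_rw [h1]
  rw [lintegral_lintegral_swap]
  · congr 1; ext x
    rw [lintegral_lintegral_swap (by fun_prop)]
    congr 1; ext z
    rw [lintegral_const_mul _ (by fun_prop)]
  · refine Measurable.aemeasurable ?_
    exact Measurable.lintegral_prod_right'
      (f := fun p : (ℝ × ℝ) × ℝ => PP a p.1.2 * PP a p.2 * (k p.1.1 p.1.2 * l p.1.1 p.2)) (by fun_prop)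

lemma T2 {a : ℝ} (ha : 0 < a) (ha2 : a < 1/2) : ∫⁻ y, gg a y * hh a y =
    ENNReal.ofReal (Gamma a * Gamma (1-2*a) / Gamma (1-a)) * ENNReal.ofReal (2 * a * Gamma (2*a)) := by
  unfold gg hh
  rw [merge a (fun y x => EE (y-x)) (fun y z => EE (z-y)) (by fun_prop) (by fun_prop)]
  have h1 : ∀ x z, ∫⁻ y, EE (y-x) * EE (z-y) = PP 2 (z-x) * EE (z-x) := by
    intro x z
    rw [← convE, ← lintegral_add_left_eq_self _ x]
    congr 1; ext y
    congr 2 <;> ring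
  simp_rw [h1]
  rw [dbl ha ha2 (fun t => PP 2 t * EE t) (by fun_prop) (fun t ht => by simp [EE_neg ht])]
  congr 1
  simp_rw [← mul_assoc, PPmul]
  rw [gam (by linarith), show 2*a+2-1 = 2*a+1 by ring, Gamma_add_one (by linarith)]

lemma T1 {a : ℝ} (ha : 0 < a) (ha2 : a < 1/2) : ∫⁻ y, gg a y * gg a y =
    ENNReal.ofReal (Gamma a * Gamma (1-2*a) / Gamma (1-a)) * ENNReal.ofReal (Gamma (2*a)) := by
  unfold gg
  rw [merge a (fun y x => EE (y-x)) (fun y z => EE (y-z)) (by fun_prop) (by fun_prop)]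
  have h1 : ∀ x z, x ≠ z → ∫⁻ y, EE (y-x) * EE (y-z) =
      ENNReal.ofReal (1/2) * (EE (z-x) + EE (x-z)) := by
    intro x z hxz
    have := corrE (z-x) (sub_ne_zero.2 hxz.symm)
    rw [neg_sub] at this
    rw [← this, ← lintegral_add_left_eq_self _ x]
    congr 1; ext y
    congr 2 <;> ring
  have h2 : ∀ x, ∫⁻ z, PP a x * PP a z * ∫⁻ y, EE (y-x) * EE (y-z) =
      ∫⁻ z, ENNReal.ofReal (1/2) * (PP a x * PP a z * EE (z-x)) +
        ENNReal.ofReal (1/2) * (PP a z * PP a x * EE (x-z)) := by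
    intro x
    apply lintegral_congr_ae
    have : ∀ᵐ z : ℝ, z ≠ x := by
      simp [ae_iff]
    filter_upwards [this] with z hz
    rw [h1 x z hz.symm]; ring
  have h3 : ∀ x, ∫⁻ z, ENNReal.ofReal (1/2) * (PP a x * PP a z * EE (z-x)) +
        ENNReal.ofReal (1/2) * (PP a z * PP a x * EE (x-z)) =
      ENNReal.ofReal (1/2) * (∫⁻ z, PP a x * PP a z * EE (z-x)) +
      ENNReal.ofReal (1/2) * ∫⁻ z, (PP a z * PP a x * EE (x-z)) := by
    intro x
    rw [lintegral_add_left (by fun_prop), lintegral_const_mul _ (by fun_prop),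
      lintegral_const_mul _ (by fun_prop)]
  simp_rw [h2, h3]
  have m1 : Measurable fun x => ∫⁻ z, PP a x * PP a z * EE (z-x) :=
    Measurable.lintegral_prod_right' (f := fun p : ℝ × ℝ => PP a p.1 * PP a p.2 * EE (p.2 - p.1)) (by fun_prop)
  have m2 : Measurable fun x => ∫⁻ z, PP a z * PP a x * EE (x-z) :=
    Measurable.lintegral_prod_right' (f := fun p : ℝ × ℝ => PP a p.2 * PP a p.1 * EE (p.1 - p.2)) (by fun_prop)
  have hD := dbl ha ha2 EE (by fun_prop) (fun t ht => EE_neg ht)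
  have hD2 : ∫⁻ x, ∫⁻ z, PP a z * PP a x * EE (x-z) = ∫⁻ x, ∫⁻ z, PP a x * PP a z * EE (z - x) :=
    lintegral_lintegral_swap (by fun_prop)
  rw [lintegral_add_left (by fun_prop), lintegral_const_mul _ m1, lintegral_const_mul _ m2, hD2, hD,
    gam (by linarith), ← add_mul, ← ENNReal.ofReal_add (by norm_num) (by norm_num)]
  norm_num

lemma FF {a y : ℝ} (ha : 0 < a) (hy : 0 < y) :
    ∫⁻ x in Ici 0, ENNReal.ofReal (Real.exp (-x) * |x-y|^(a-1)) =
      gg a y + ENNReal.ofReal (Gamma a) * EE y := by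
  have h0 : ∫⁻ x in Ici 0, ENNReal.ofReal (Real.exp (-x) * |x-y|^(a-1)) =
      ∫⁻ x, EE x * PP a (y - x) + EE x * PP a (x-y) := by
    rw [← lintegral_indicator measurableSet_Ici]
    apply lintegral_congr_ae
    have t1 : ∀ᵐ z : ℝ, z ≠ y := by simp [ae_iff]
    have t2 : ∀ᵐ z : ℝ, z ≠ 0 := by simp [ae_iff]
    filter_upwards [t1, t2] with x h1 h2
    rcases lt_or_gt_of_ne h2 with h | h
    · rw [indicator_of_notMem (by simpa using h), EE_neg h.le]; simp
    · rw [indicator_of_mem (by simpa using h.le), EE_pos h, ENNReal.ofReal_mul (by positivity)]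
      rcases lt_or_gt_of_ne h1 with h' | h'
      · rw [PP_pos (by linarith), PP_neg (t := x-y) (by linarith), abs_of_neg (by linarith), neg_sub]
        simp
      · rw [PP_pos (t := x-y) (by linarith), PP_neg (t := y-x) (by linarith), abs_of_pos (by linarith)]
        simp
  rw [h0, lintegral_add_left (by fun_prop)]
  congr 1
  · unfold gg
    rw [← lintegral_sub_left_eq_self _ y]
    congr 1; ext x; rw [sub_sub_cancel, mul_comm]
  · rw [← lintegral_add_left_eq_self _ y, ← gam ha, ← lintegral_mul_const _ (by fun_prop)]
    congr 1; ext x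
    rw [add_sub_cancel_left]
    by_cases hx : 0 < x
    · rw [EE_pos hx, EE_pos hy, EE_pos (by linarith), neg_add, Real.exp_add,
        ENNReal.ofReal_mul (by positivity)]; ring
    · simp [PP_neg (not_lt.1 hx)]

lemma GG {a y : ℝ} :
    ∫⁻ z in Ici 0, ENNReal.ofReal (Real.exp (-|y-z|) * z^(a-1)) = gg a y + hh a y := by
  unfold gg hh
  rw [← lintegral_add_left (by fun_prop), ← lintegral_indicator measurableSet_Ici]
  apply lintegral_congr_ae
  have t1 : ∀ᵐ z : ℝ, z ≠ y := by simp [ae_iff]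
  have t2 : ∀ᵐ z : ℝ, z ≠ 0 := by simp [ae_iff]
  filter_upwards [t1, t2] with x h1 h2
  rcases lt_or_gt_of_ne h2 with h | h
  · rw [indicator_of_notMem (by simpa using h), PP_neg h.le]; simp
  · rw [indicator_of_mem (by simpa using h.le), PP_pos h, ENNReal.ofReal_mul (by positivity)]
    rcases lt_or_gt_of_ne h1 with h' | h'
    · rw [EE_pos (by linarith), EE_neg (t := x-y) (by linarith), abs_of_pos (by linarith), mul_comm]
      simp
    · rw [EE_pos (t := x-y) (by linarith), EE_neg (t := y-x) (by linarith), abs_of_neg (by linarith), neg_sub, mul_comm]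
      simp

lemma gg_neg {a y : ℝ} (hy : y ≤ 0) : gg a y = 0 := by
  unfold gg
  rw [lintegral_eq_zero_iff (by fun_prop)]
  refine Filter.Eventually.of_forall fun x => ?_
  rcases le_or_gt x 0 with h | h
  · simp [PP_neg h]
  · have : y - x ≤ 0 := by linarith
    simp [EE_neg this]

theorem stmt_5 (H : ℝ) (h1 : 1/2 < H) (h2 : H < 3/4) :
    (∫ p in (Ici (0:ℝ)) ×ˢ (Ici (0:ℝ)) ×ˢ (Ici (0:ℝ)),
      Real.exp (-p.1 - |p.2.1 - p.2.2|) *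
        p.2.2 ^ (2*H - 2) * |p.1 - p.2.1| ^ (2*H - 2))
      = (2*H - 1/2) * Real.Gamma (2*H - 1) ^ 2 +
        (4*H - 1) * Real.Gamma (2*H - 1) * Real.Gamma (3 - 4*H) *
          Real.Gamma (4*H - 2) / Real.Gamma (2 - 2*H) := by
  obtain ⟨a, rfl⟩ : ∃ a, H = (a+1)/2 := ⟨2*H-1, by ring⟩
  have ha : 0 < a := by linarith
  have ha2 : a < 1/2 := by linarith
  rw [show 2*((a+1)/2) - 2 = a - 1 by ring, show 2*((a+1)/2) - 1 = a by ring,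
    show 2*((a+1)/2) - 1/2 = a + 1/2 by ring, show 4*((a+1)/2) - 1 = 2*a+1 by ring,
    show 4*((a+1)/2) - 2 = 2*a by ring, show 3 - 4*((a+1)/2) = 1-2*a by ring,
    show 2 - 2*((a+1)/2) = 1-a by ring]
  have hG : 0 < Gamma (1-a) := Gamma_pos_of_pos (by linarith)
  have hG1 : 0 < Gamma a := Gamma_pos_of_pos (by linarith)
  have hG2 : 0 < Gamma (1-2*a) := Gamma_pos_of_pos (by linarith)
  have hG3 : 0 < Gamma (2*a) := Gamma_pos_of_pos (by linarith)
  have hms : MeasurableSet ((Ici (0:ℝ)) ×ˢ (Ici (0:ℝ)) ×ˢ (Ici (0:ℝ))) :=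
    measurableSet_Ici.prod (measurableSet_Ici.prod measurableSet_Ici)
  have hmeas : Measurable fun p : ℝ × ℝ × ℝ => Real.exp (-p.1 - |p.2.1 - p.2.2|) *
        p.2.2 ^ (a - 1) * |p.1 - p.2.1| ^ (a - 1) := by fun_prop
  rw [integral_eq_lintegral_of_nonneg_ae _ hmeas.aestronglyMeasurable]
  swap
  · filter_upwards [ae_restrict_mem hms] with p hp
    have : 0 ≤ p.2.2 := hp.2.2
    simp only [Pi.zero_apply]; positivity
  have key : ∫⁻ p in (Ici (0:ℝ)) ×ˢ (Ici (0:ℝ)) ×ˢ (Ici (0:ℝ)),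
      ENNReal.ofReal (Real.exp (-p.1 - |p.2.1 - p.2.2|) *
        p.2.2 ^ (a - 1) * |p.1 - p.2.1| ^ (a - 1)) =
      ∫⁻ y in Ici (0:ℝ), (∫⁻ x in Ici 0, ENNReal.ofReal (Real.exp (-x) * |x-y|^(a-1))) *
        ∫⁻ z in Ici 0, ENNReal.ofReal (Real.exp (-|y-z|) * z^(a-1)) := by
    have hr : (volume : Measure (ℝ × ℝ × ℝ)).restrict
        ((Ici (0:ℝ)) ×ˢ (Ici (0:ℝ)) ×ˢ (Ici (0:ℝ))) =
        (volume.restrict (Ici 0)).prod ((volume.restrict (Ici 0)).prod (volume.restrict (Ici 0))) := by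
      rw [Measure.prod_restrict, Measure.prod_restrict]; rfl
    rw [hr, lintegral_prod_symm _ (by fun_prop), lintegral_prod _ (by
      refine Measurable.aemeasurable ?_
      exact Measurable.lintegral_prod_left' (f := fun p : ℝ × ℝ × ℝ => ENNReal.ofReal (Real.exp (-p.1 - |p.2.1 - p.2.2|) *
        p.2.2 ^ (a - 1) * |p.1 - p.2.1| ^ (a - 1))) (by fun_prop))]
    congr 1; ext y
    rw [← lintegral_const_mul _ (by fun_prop)]
    refine setLIntegral_congr_fun measurableSet_Ici fun z hz => ?_
    have hz' : (0:ℝ) ≤ z := hz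
    simp only
    rw [← lintegral_mul_const _ (by fun_prop)]
    congr 1; ext x
    rw [← ENNReal.ofReal_mul (by positivity), sub_eq_add_neg, Real.exp_add]
    congr 1; ring
  have key2 : ∫⁻ y in Ici (0:ℝ), (∫⁻ x in Ici 0, ENNReal.ofReal (Real.exp (-x) * |x-y|^(a-1))) *
        ∫⁻ z in Ici 0, ENNReal.ofReal (Real.exp (-|y-z|) * z^(a-1)) =
      ∫⁻ y, ((gg a y * gg a y + gg a y * hh a y) + ENNReal.ofReal (Gamma a) * (EE y * gg a y)) +
        ENNReal.ofReal (Gamma a) * (EE y * hh a y) := by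
    rw [← lintegral_indicator measurableSet_Ici]
    apply lintegral_congr_ae
    have t2 : ∀ᵐ z : ℝ, z ≠ 0 := by simp [ae_iff]
    filter_upwards [t2] with y hy
    rcases lt_or_gt_of_ne hy with h | h
    · rw [indicator_of_notMem (by simpa using h), EE_neg h.le, gg_neg h.le]; simp
    · rw [indicator_of_mem (by simpa using h.le), FF ha h, GG]; ring
  rw [key, key2, lintegral_add_left (by fun_prop), lintegral_add_left (by fun_prop),
    lintegral_add_left (by fun_prop), lintegral_const_mul _ (by fun_prop),
    lintegral_const_mul _ (by fun_prop), T1 ha ha2, T2 ha ha2, T3 ha, T4 ha]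
  rw [← ENNReal.ofReal_mul (by positivity), ← ENNReal.ofReal_mul (by positivity),
    ← ENNReal.ofReal_mul (by positivity), ← ENNReal.ofReal_mul (by positivity),
    ← ENNReal.ofReal_add (by positivity) (by positivity),
    ← ENNReal.ofReal_add (by positivity) (by positivity),
    ← ENNReal.ofReal_add (by positivity) (by positivity), ENNReal.toReal_ofReal (by positivity)]
  field_simp
  ring
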